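/- In ℝ⁵ with the standard Euclidean inner product, let S be the set of five vectors (-2/3,4/3,-2/3,1/2,-1/2), (-2/3,1/3,1/3,1/2,-1/2), (-2/3,-2/3,4/3,1/2,-1/2), (1/3,1/3,-2/3,-1/2,1/2), (1/3,-2/3,1/3,-1/2,1/2). Then the minimum of ‖x‖² over x in the convex hull of S equals 1/42, and it is attained at the point β₈ = (-2/21,1/21,1/21,-1/14,1/14). -/

import Mathlib

/-!
If `β ≠ 0` and `‖β‖ ^ 2 ≤ ⟪β, y⟫` for all `y ∈ s`, then `s`, and hence its convex hull, lies on the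
side of the hyperplane `⟪β, ·⟫ = ‖β‖ ^ 2` that does not contain the origin, and `β` is the point of
that half-space closest to the origin. Here all five weights lie on this hyperplane, and `β₈` lies
in the triangle spanned by the weights of `x_{1,23}`, `x_{2,12}` and `x_{2,13}`.
-/

/-- A vector in `ℝ⁵` with the standard Euclidean inner product. -/
noncomputable def vec5 (a b c d e : ℝ) : EuclideanSpace ℝ (Fin 5) :=
  (WithLp.equiv 2 (Fin 5 → ℝ)).symm ![a, b, c, d, e]

section InnerProductSpace

variable {E : Type*} [SeminormedAddCommGroup E] [InnerProductSpace ℝ E] {s : Set E} {x β : E}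

theorem le_real_inner_of_mem_convexHull {c : ℝ} (hs : ∀ y ∈ s, c ≤ inner ℝ β y)
    (hx : x ∈ convexHull ℝ s) : c ≤ inner ℝ β x :=
  convexHull_min hs (convex_halfSpace_ge (innerₛₗ ℝ β).isLinear c) hx

theorem norm_le_norm_of_sq_norm_le_real_inner (h : ‖β‖ ^ 2 ≤ inner ℝ β x) : ‖β‖ ≤ ‖x‖ := by
  have hexpand : ‖β - x‖ ^ 2 = ‖β‖ ^ 2 - 2 * inner ℝ β x + ‖x‖ ^ 2 := norm_sub_sq_real β x
  have hsq : ‖β‖ ^ 2 ≤ ‖x‖ ^ 2 := by linarith [sq_nonneg ‖β - x‖]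
  exact le_of_sq_le_sq hsq (norm_nonneg x)

theorem norm_le_norm_of_mem_convexHull (hs : ∀ y ∈ s, ‖β‖ ^ 2 ≤ inner ℝ β y)
    (hx : x ∈ convexHull ℝ s) : ‖β‖ ≤ ‖x‖ :=
  norm_le_norm_of_sq_norm_le_real_inner (le_real_inner_of_mem_convexHull hs hx)

end InnerProductSpace

section ConvexHull

variable {𝕜 E : Type*} [Field 𝕜] [LinearOrder 𝕜] [IsStrictOrderedRing 𝕜] [AddCommGroup E]
  [Module 𝕜 E] {s : Set E} {x y z : E} {a b c : 𝕜}

theorem add_add_mem_convexHull (hx : x ∈ s) (hy : y ∈ s) (hz : z ∈ s) (ha : 0 ≤ a) (hb : 0 ≤ b)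
    (hc : 0 ≤ c) (habc : a + b + c = 1) : a • x + b • y + c • z ∈ convexHull 𝕜 s :=
  mem_convexHull_of_exists_fintype ![a, b, c] ![x, y, z]
    (by simp [Fin.forall_fin_succ, ha, hb, hc]) (by simp [Fin.sum_univ_three, habc])
    (by simp [Fin.forall_fin_succ, hx, hy, hz]) (by simp [Fin.sum_univ_three])

end ConvexHull

section Vec5

variable (a b c d e a' b' c' d' e' : ℝ)

theorem vec5_add_vec5 :
    vec5 a b c d e + vec5 a' b' c' d' e' = vec5 (a + a') (b + b') (c + c') (d + d') (e + e') := by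
  ext i
  fin_cases i <;> simp [vec5]

theorem smul_vec5 (r : ℝ) :
    r • vec5 a b c d e = vec5 (r * a) (r * b) (r * c) (r * d) (r * e) := by
  ext i
  fin_cases i <;> simp [vec5]

theorem inner_vec5_vec5 :
    inner ℝ (vec5 a b c d e) (vec5 a' b' c' d' e') =
      a * a' + b * b' + c * c' + d * d' + e * e' := by
  simp [vec5, PiLp.inner_apply, Fin.sum_univ_five, mul_comm]

theorem norm_vec5_sq : ‖vec5 a b c d e‖ ^ 2 = a ^ 2 + b ^ 2 + c ^ 2 + d ^ 2 + e ^ 2 := by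
  rw [← real_inner_self_eq_norm_sq, inner_vec5_vec5]
  ring

end Vec5

/-- Table (2.3) for `(GL(3)×GL(2), Sym²k³⊗k²)`: the minimum of `‖x‖²` over the
convex hull of the listed weight vectors equals `1/42`, attained at
`β₈ = ((-2/21) (1/21) (1/21) (-1/14) (1/14))`. -/
theorem minsq_of_convexHull_weights :
    let S : Set (EuclideanSpace ℝ (Fin 5)) :=
      {vec5 (-2/3) (4/3) (-2/3) (1/2) (-1/2),
       vec5 (-2/3) (1/3) (1/3) (1/2) (-1/2),
       vec5 (-2/3) (-2/3) (4/3) (1/2) (-1/2),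
       vec5 (1/3) (1/3) (-2/3) (-1/2) (1/2),
       vec5 (1/3) (-2/3) (1/3) (-1/2) (1/2)}
    let β : EuclideanSpace ℝ (Fin 5) := vec5 (-2/21) (1/21) (1/21) (-1/14) (1/14)
    β ∈ convexHull ℝ S ∧ ‖β‖ ^ 2 = 1/42 ∧
      ∀ x ∈ convexHull ℝ S, (1/42 : ℝ) ≤ ‖x‖ ^ 2 := by
  intro S β
  -- Exchanging the second and third coordinates fixes `β` and swaps the last two weights, so these
  -- get equal coefficients; the fourth coordinate and the normalization then determine all three.
  have hβ : (3 / 7 : ℝ) • vec5 (-2/3) (1/3) (1/3) (1/2) (-1/2) +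
      (2 / 7 : ℝ) • vec5 (1/3) (1/3) (-2/3) (-1/2) (1/2) +
      (2 / 7 : ℝ) • vec5 (1/3) (-2/3) (1/3) (-1/2) (1/2) = β := by
    norm_num [β, smul_vec5, vec5_add_vec5]
  have hmem : β ∈ convexHull ℝ S := by
    rw [← hβ]
    apply add_add_mem_convexHull <;> norm_num [S]
  have hnorm : ‖β‖ ^ 2 = 1 / 42 := by
    norm_num [β, norm_vec5_sq]
  have hinner : ∀ y ∈ S, inner ℝ β y = 1 / 42 := by
    rintro y (rfl | rfl | rfl | rfl | rfl) <;> norm_num [β, inner_vec5_vec5]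
  refine ⟨hmem, hnorm, fun x hx ↦ ?_⟩
  have hle : ‖β‖ ≤ ‖x‖ :=
    norm_le_norm_of_mem_convexHull (fun y hy ↦ (hnorm.trans (hinner y hy).symm).le) hx
  rw [← hnorm]
  gcongr
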